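/- Let 0 < α ≤ 1/2 and let t satisfy απ < t ≤ π. Then the set {Re(e^{it}·f(z)/z) : f ∈ K(α), z ∈ 𝔻 \ {0}} is not bounded below; that is, Q_α(t) = −∞. In fact this already holds with the single function f = k_α: Re(e^{it}·k_α(z)/z) is not bounded below for z ∈ 𝔻 \ {0}. -/

import Mathlib

/-- The unit disk `{z : ℂ | |z| < 1}`. -/
noncomputable def unitDisk : Set ℂ := Metric.ball 0 1

/-- The extremal convex function of order `α`:
`k_α(z) = ((1-z)^(2α-1) - 1)/(1-2α)` (so that `k_α(0)=0`, `k_α'(0)=1`),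
with `k_{1/2}(z) = -log(1-z)` (principal branches). -/
noncomputable def kfun (α : ℝ) (z : ℂ) : ℂ :=
  if α = 1 / 2 then -Complex.log (1 - z)
  else ((1 - z) ^ ((2 * α - 1 : ℝ) : ℂ) - 1) / ((1 - 2 * α : ℝ) : ℂ)

/-- `h_α(z) = k_α(z)/z` for `z ≠ 0`, `h_α(0) = 1`. -/
noncomputable def hfun (α : ℝ) (z : ℂ) : ℂ :=
  if z = 0 then 1 else kfun α z / z

/-- `f ∈ K(α)`: `f` is analytic on the unit disk, normalized by `f(0)=0`, `f'(0)=1`,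
with nonvanishing derivative and `Re(1 + z f''(z)/f'(z)) > α` on the disk. -/
def IsConvexOfOrder (α : ℝ) (f : ℂ → ℂ) : Prop :=
  DifferentiableOn ℂ f unitDisk ∧ f 0 = 0 ∧ deriv f 0 = 1 ∧
    ∀ z ∈ unitDisk, deriv f z ≠ 0 ∧
      α < (1 + z * deriv (deriv f) z / deriv f z).re

/-!
Write `e = exp (i t)`. For `r > 0` and `u ≠ 0` one has the exact identity
`k_α(1 - r u) = k_α(1 - u) + u ^ (2α - 1) k_α(1 - r)`, and for `α ≤ 1/2` the real number
`k_α(1 - r)` tends to `+∞` as `r → 0⁺`. Hence `Re (e k_α(z) / z) → -∞` as `z = 1 - r u → 1` as soon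
as `Re (e u ^ (2α - 1)) < 0`, and `z` approaches `1` from inside the disk when `Re u > 0`. The two
conditions are met by `u = exp (i θ)` with `θ = (t - π) / (2 (1 - α))`, for which
`e u ^ (2α - 1) = -u`; here `|θ| < π / 2` says exactly that `α π < t < (2 - α) π`.
-/

open Complex Filter Set Topology

theorem ofReal_mul_cpow {r : ℝ} (hr : 0 < r) {u : ℂ} (hu : u ≠ 0) (c : ℂ) :
    (r * u) ^ c = (r : ℂ) ^ c * u ^ c := by
  have hr' : (r : ℂ) ≠ 0 := ofReal_ne_zero.2 hr.ne'
  rw [cpow_def_of_ne_zero (mul_ne_zero hr' hu), cpow_def_of_ne_zero hr', cpow_def_of_ne_zero hu,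
    log_ofReal_mul hr hu, ofReal_log hr.le, add_mul, exp_add]

theorem exp_mul_I_cpow {θ : ℝ} (hθ : θ ∈ Ioc (-Real.pi) Real.pi) (c : ℂ) :
    exp (θ * I) ^ c = exp (c * θ * I) := by
  have him : ((θ : ℂ) * I).im = θ := by simp
  rw [cpow_def_of_ne_zero (exp_ne_zero _), log_exp (him.symm ▸ hθ.1) (him.symm ▸ hθ.2)]
  ring_nf

theorem tendsto_re_atBot_of_tendsto_div {ι : Type*} {l : Filter ι} {A : ι → ℝ} {w : ι → ℂ} {c : ℂ}
    (hA : Tendsto A l atTop) (hw : Tendsto (fun i => w i / A i) l (𝓝 c)) (hc : c.re < 0) :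
    Tendsto (fun i => (w i).re) l atBot := by
  refine (hA.atTop_mul_neg hc ((continuous_re.tendsto c).comp hw)).congr' ?_
  filter_upwards [hA.eventually_ne_atTop 0] with i hi
  rw [Function.comp_apply, div_ofReal_re, mul_div_cancel₀ _ hi]

section UnitDisk

variable {z : ℂ}

theorem mem_unitDisk : z ∈ unitDisk ↔ ‖z‖ < 1 :=
  mem_ball_zero_iff

theorem one_sub_mem_slitPlane (hz : z ∈ unitDisk) : 1 - z ∈ slitPlane := by
  simpa only [sub_eq_add_neg] using
    mem_slitPlane_of_norm_lt_one ((norm_neg z).trans_lt (mem_unitDisk.1 hz))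

theorem re_one_add_div_one_sub_pos (hz : z ∈ unitDisk) : 0 < ((1 + z) / (1 - z)).re := by
  have hne : 1 - z ≠ 0 := slitPlane_ne_zero (one_sub_mem_slitPlane hz)
  have hsq : normSq z < 1 := by
    rw [normSq_eq_norm_sq]
    exact pow_lt_one₀ (norm_nonneg z) (mem_unitDisk.1 hz) two_ne_zero
  have hre : ((1 + z) / (1 - z)).re = (1 - normSq z) / normSq (1 - z) := by
    rw [div_re, ← add_div, normSq_apply z]
    simp only [add_re, sub_re, one_re, add_im, sub_im, one_im]
    ring
  rw [hre]
  exact div_pos (sub_pos.2 hsq) (normSq_pos.2 hne)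

theorem eventually_one_sub_ofReal_mul_mem_unitDisk {u : ℂ} (hu : 0 < u.re) :
    ∀ᶠ r : ℝ in 𝓝[>] 0, 1 - r * u ∈ unitDisk := by
  have hlim : Tendsto (fun r : ℝ => r * normSq u) (𝓝[>] 0) (𝓝 0) := by
    have hcont : Continuous fun r : ℝ => r * normSq u := by fun_prop
    simpa only [zero_mul] using (hcont.tendsto 0).mono_left nhdsWithin_le_nhds
  filter_upwards [self_mem_nhdsWithin, hlim.eventually_lt_const (mul_pos two_pos hu)]
    with r (hr : 0 < r) hru
  have hsq : ‖1 - r * u‖ ^ 2 = 1 - r * (2 * u.re - r * normSq u) := by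
    rw [← normSq_eq_norm_sq, normSq_apply, normSq_apply]
    simp only [sub_re, sub_im, re_ofReal_mul, im_ofReal_mul, one_re, one_im]
    ring
  rw [mem_unitDisk, ← sq_lt_one_iff₀ (norm_nonneg _), hsq]
  linarith [mul_pos hr (sub_pos.2 hru)]

theorem tendsto_one_sub_ofReal_mul (u : ℂ) :
    Tendsto (fun r : ℝ => 1 - r * u) (𝓝[>] 0) (𝓝 1) := by
  have hcont : Continuous fun r : ℝ => 1 - r * u := by fun_prop
  simpa only [ofReal_zero, zero_mul, sub_zero] using
    (hcont.tendsto 0).mono_left nhdsWithin_le_nhds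

end UnitDisk

section Convexity

variable {α : ℝ} {z : ℂ}

theorem kfun_half : kfun (1 / 2) = fun z => -log (1 - z) :=
  funext fun _ => if_pos rfl

theorem kfun_of_ne_half (hα : α ≠ 1 / 2) :
    kfun α = fun z => ((1 - z) ^ ((2 * α - 1 : ℝ) : ℂ) - 1) / ((1 - 2 * α : ℝ) : ℂ) :=
  funext fun _ => if_neg hα

theorem kfun_zero (α : ℝ) : kfun α 0 = 0 := by
  simp [kfun]

theorem hasDerivAt_kfun (α : ℝ) (hz : 1 - z ∈ slitPlane) :
    HasDerivAt (kfun α) ((1 - z) ^ ((2 * α - 2 : ℝ) : ℂ)) z := by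
  have hsub : HasDerivAt (fun w : ℂ => 1 - w) (-1) z := (hasDerivAt_id z).const_sub 1
  rcases eq_or_ne α (1 / 2) with rfl | hα
  · rw [kfun_half]
    refine (hsub.clog hz).fun_neg.congr_deriv ?_
    have hexp : ((2 * (1 / 2) - 2 : ℝ) : ℂ) = -1 := by norm_num
    rw [hexp, cpow_neg_one, neg_div, neg_neg, one_div]
  · have hne : ((1 - 2 * α : ℝ) : ℂ) ≠ 0 :=
      ofReal_ne_zero.2 fun h => hα (by linarith)
    have hexp : ((2 * α - 1 : ℝ) : ℂ) - 1 = ((2 * α - 2 : ℝ) : ℂ) := by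
      push_cast
      ring
    rw [kfun_of_ne_half hα]
    refine (((hsub.cpow_const hz).sub_const 1).div_const _).congr_deriv ?_
    rw [hexp, div_eq_iff hne]
    push_cast
    ring

theorem hasDerivAt_deriv_kfun (α : ℝ) (hz : 1 - z ∈ slitPlane) :
    HasDerivAt (deriv (kfun α)) ((2 - 2 * α) / (1 - z) * deriv (kfun α) z) z := by
  have hsub : HasDerivAt (fun w : ℂ => 1 - w) (-1) z := (hasDerivAt_id z).const_sub 1
  have hderiv : deriv (kfun α) =ᶠ[𝓝 z] fun w => (1 - w) ^ ((2 * α - 2 : ℝ) : ℂ) := by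
    filter_upwards [hsub.continuousAt (isOpen_slitPlane.mem_nhds hz)] with w hw
    exact (hasDerivAt_kfun α hw).deriv
  refine ((hsub.cpow_const hz).congr_of_eventuallyEq hderiv).congr_deriv ?_
  rw [hderiv.eq_of_nhds, cpow_sub _ _ (slitPlane_ne_zero hz), cpow_one]
  push_cast
  ring

theorem deriv_kfun_ne_zero (α : ℝ) (hz : 1 - z ∈ slitPlane) : deriv (kfun α) z ≠ 0 := by
  rw [(hasDerivAt_kfun α hz).deriv]
  exact fun h => slitPlane_ne_zero hz ((cpow_eq_zero_iff _ _).1 h).1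

theorem one_add_mul_deriv_deriv_div_deriv_kfun (α : ℝ) (hz : 1 - z ∈ slitPlane) :
    1 + z * deriv (deriv (kfun α)) z / deriv (kfun α) z =
      α + ((1 - α : ℝ) : ℂ) * ((1 + z) / (1 - z)) := by
  have hne : 1 - z ≠ 0 := slitPlane_ne_zero hz
  have hderiv : deriv (kfun α) z ≠ 0 := deriv_kfun_ne_zero α hz
  rw [(hasDerivAt_deriv_kfun α hz).deriv]
  field_simp
  push_cast
  ring

theorem isConvexOfOrder_kfun (hα : α < 1) : IsConvexOfOrder α (kfun α) := by
  refine ⟨fun z hz => ?_, kfun_zero α, ?_, fun z hz => ⟨?_, ?_⟩⟩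
  · exact (hasDerivAt_kfun α (one_sub_mem_slitPlane hz)).differentiableAt.differentiableWithinAt
  · simpa using (hasDerivAt_kfun α (z := 0) (by simp)).deriv
  · exact deriv_kfun_ne_zero α (one_sub_mem_slitPlane hz)
  · rw [one_add_mul_deriv_deriv_div_deriv_kfun α (one_sub_mem_slitPlane hz), add_re, ofReal_re,
      re_ofReal_mul]
    exact lt_add_of_pos_right α (mul_pos (sub_pos.2 hα) (re_one_add_div_one_sub_pos hz))

end Convexity

section Growth

variable {α r : ℝ} {u : ℂ}

theorem kfun_one_sub_ofReal_mul (α : ℝ) (hr : 0 < r) (hu : u ≠ 0) :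
    kfun α (1 - r * u) = kfun α (1 - u) + u ^ ((2 * α - 1 : ℝ) : ℂ) * kfun α (1 - r) := by
  rcases eq_or_ne α (1 / 2) with rfl | hα
  · have hexp : ((2 * (1 / 2) - 1 : ℝ) : ℂ) = 0 := by norm_num
    simp only [kfun_half, sub_sub_cancel]
    rw [hexp, cpow_zero, log_ofReal_mul hr hu, ofReal_log hr.le]
    ring
  · simp only [kfun_of_ne_half hα, sub_sub_cancel]
    rw [ofReal_mul_cpow hr hu]
    ring

theorem kfun_half_one_sub_ofReal (hr : 0 ≤ r) :
    kfun (1 / 2) (1 - r) = ((-Real.log r : ℝ) : ℂ) := by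
  simp only [kfun_half, sub_sub_cancel, ofReal_neg, ofReal_log hr]

theorem kfun_one_sub_ofReal_of_ne_half (hα : α ≠ 1 / 2) (hr : 0 ≤ r) :
    kfun α (1 - r) = (((r ^ (2 * α - 1) - 1) / (1 - 2 * α) : ℝ) : ℂ) := by
  simp only [kfun_of_ne_half hα, sub_sub_cancel]
  rw [ofReal_div, ofReal_sub (r ^ _), ofReal_cpow hr, ofReal_one]

theorem ofReal_re_kfun_one_sub_ofReal (α : ℝ) (hr : 0 ≤ r) :
    ((kfun α (1 - r)).re : ℂ) = kfun α (1 - r) := by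
  rcases eq_or_ne α (1 / 2) with rfl | hα
  · rw [kfun_half_one_sub_ofReal hr, ofReal_re]
  · rw [kfun_one_sub_ofReal_of_ne_half hα hr, ofReal_re]

theorem tendsto_re_kfun_one_sub_ofReal_atTop (hα : α ≤ 1 / 2) :
    Tendsto (fun r : ℝ => (kfun α (1 - r)).re) (𝓝[>] 0) atTop := by
  rcases hα.eq_or_lt with rfl | hα
  · refine (tendsto_neg_atBot_atTop.comp Real.tendsto_log_nhdsGT_zero).congr' ?_
    filter_upwards [self_mem_nhdsWithin] with r (hr : 0 < r)
    rw [kfun_half_one_sub_ofReal hr.le, ofReal_re, Function.comp_apply]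
  · have hpow : Tendsto (fun r : ℝ => r ^ (2 * α - 1)) (𝓝[>] 0) atTop :=
      tendsto_rpow_neg_nhdsGT_zero (by linarith)
    refine ((tendsto_atTop_add_const_right _ (-1) hpow).atTop_div_const
      (show 0 < 1 - 2 * α by linarith)).congr' ?_
    filter_upwards [self_mem_nhdsWithin] with r (hr : 0 < r)
    rw [kfun_one_sub_ofReal_of_ne_half hα.ne hr.le, ofReal_re, sub_eq_add_neg (r ^ _)]

theorem tendsto_kfun_one_sub_ofReal_mul_div (hα : α ≤ 1 / 2) (hu : u ≠ 0) :
    Tendsto (fun r : ℝ => kfun α (1 - r * u) / (kfun α (1 - r)).re) (𝓝[>] 0)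
      (𝓝 (u ^ ((2 * α - 1 : ℝ) : ℂ))) := by
  have hA := tendsto_re_kfun_one_sub_ofReal_atTop hα
  have hconst : Tendsto (fun r : ℝ => kfun α (1 - u) / (kfun α (1 - r)).re) (𝓝[>] 0) (𝓝 0) := by
    simpa only [div_eq_mul_inv, ofReal_inv, ofReal_zero, mul_zero, Function.comp_def,
      Pi.inv_apply] using
      ((continuous_ofReal.tendsto 0).comp hA.inv_tendsto_atTop).const_mul (kfun α (1 - u))
  have hsum := hconst.add_const (u ^ ((2 * α - 1 : ℝ) : ℂ))
  rw [zero_add] at hsum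
  refine hsum.congr' ?_
  filter_upwards [self_mem_nhdsWithin, hA.eventually_ne_atTop 0] with r (hr : 0 < r) hAr
  rw [kfun_one_sub_ofReal_mul α hr hu, add_div, ← ofReal_re_kfun_one_sub_ofReal α hr.le, ofReal_re,
    mul_div_cancel_right₀ _ (ofReal_ne_zero.2 hAr)]

theorem tendsto_re_mul_kfun_div_self_atBot (hα : α ≤ 1 / 2) (hu : u ≠ 0) {e : ℂ}
    (he : (e * u ^ ((2 * α - 1 : ℝ) : ℂ)).re < 0) :
    Tendsto (fun r : ℝ => (e * (kfun α (1 - r * u) / (1 - r * u))).re) (𝓝[>] 0) atBot := by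
  refine tendsto_re_atBot_of_tendsto_div (tendsto_re_kfun_one_sub_ofReal_atTop hα) ?_ he
  have hlim := ((tendsto_kfun_one_sub_ofReal_mul_div hα hu).div
    (tendsto_one_sub_ofReal_mul u) one_ne_zero).const_mul e
  rw [div_one] at hlim
  refine hlim.congr fun r => ?_
  simp only [Pi.div_apply]
  ring

end Growth

theorem exists_re_pos_and_re_exp_mul_cpow_neg {α t : ℝ} (ht0 : α * Real.pi < t)
    (ht1 : t < (2 - α) * Real.pi) :
    ∃ u : ℂ, 0 < u.re ∧ (exp (t * I) * u ^ ((2 * α - 1 : ℝ) : ℂ)).re < 0 := by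
  have hα : 0 < 1 - α := by nlinarith [Real.pi_pos]
  obtain ⟨θ, hθ⟩ : ∃ θ : ℝ, t = Real.pi + 2 * (1 - α) * θ :=
    ⟨(t - Real.pi) / (2 * (1 - α)), by field_simp; ring⟩
  have hθ_gt : -(Real.pi / 2) < θ := lt_of_mul_lt_mul_left (by linarith) hα.le
  have hθ_lt : θ < Real.pi / 2 := lt_of_mul_lt_mul_left (by linarith) hα.le
  have hu : 0 < (exp (θ * I)).re := by
    rw [exp_ofReal_mul_I_re]
    exact Real.cos_pos_of_mem_Ioo ⟨hθ_gt, hθ_lt⟩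
  have hdir : exp (t * I) * exp (θ * I) ^ ((2 * α - 1 : ℝ) : ℂ) = -exp (θ * I) := by
    have harg : (t : ℂ) * I + ((2 * α - 1 : ℝ) : ℂ) * θ * I = θ * I + Real.pi * I := by
      rw [hθ]
      push_cast
      ring
    rw [exp_mul_I_cpow ⟨by linarith, by linarith⟩, ← exp_add, harg, exp_add, exp_pi_mul_I,
      mul_neg_one]
  refine ⟨exp (θ * I), hu, ?_⟩
  rw [hdir, neg_re]
  exact neg_neg_of_pos hu

theorem not_bddBelow_re_exp_mul_kfun_div_self {α t : ℝ} (hα : α ≤ 1 / 2) (ht0 : α * Real.pi < t)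
    (ht1 : t < (2 - α) * Real.pi) :
    ¬ BddBelow {x : ℝ | ∃ z ∈ unitDisk, z ≠ 0 ∧ x = (exp (t * I) * (kfun α z / z)).re} := by
  rintro ⟨b, hb⟩
  obtain ⟨u, hu, hneg⟩ := exists_re_pos_and_re_exp_mul_cpow_neg ht0 ht1
  have hlim := tendsto_re_mul_kfun_div_self_atBot hα (ne_zero_of_re_pos hu) hneg
  obtain ⟨r, hrb, hr_mem, hr_ne⟩ := ((hlim.eventually_lt_atBot b).and
    ((eventually_one_sub_ofReal_mul_mem_unitDisk hu).and
      ((tendsto_one_sub_ofReal_mul u).eventually_ne one_ne_zero))).exists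
  exact hrb.not_ge (hb ⟨1 - r * u, hr_mem, hr_ne, rfl⟩)

theorem Q_eq_neg_infty_general {α t : ℝ} (hα : α ≤ 1 / 2) (ht0 : α * Real.pi < t)
    (ht1 : t < (2 - α) * Real.pi) :
    ¬ BddBelow {x : ℝ | ∃ f : ℂ → ℂ, IsConvexOfOrder α f ∧
        ∃ z ∈ unitDisk, z ≠ 0 ∧ x = (exp (t * I) * (f z / z)).re} ∧
    ¬ BddBelow {x : ℝ | ∃ z ∈ unitDisk, z ≠ 0 ∧ x = (exp (t * I) * (kfun α z / z)).re} := by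
  have hk := not_bddBelow_re_exp_mul_kfun_div_self hα ht0 ht1
  refine ⟨fun h => hk (h.mono ?_), hk⟩
  rintro x ⟨z, hz, hz0, rfl⟩
  exact ⟨kfun α, isConvexOfOrder_kfun (by linarith), z, hz, hz0, rfl⟩

/-- for `0 < α ≤ 1/2` and `απ < t ≤ π`, the set of values `Re(e^{it} f(z)/z)`
over `f ∈ K(α)` is not bounded below (`Q_α(t) = -∞`); indeed already the values
`Re(e^{it} k_α(z)/z)` are not bounded below. -/
theorem Q_eq_neg_infty (α : ℝ) (hα0 : 0 < α) (hα1 : α ≤ 1 / 2)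
    (t : ℝ) (ht0 : α * Real.pi < t) (ht1 : t ≤ Real.pi) :
    ¬ BddBelow {x : ℝ | ∃ f : ℂ → ℂ, IsConvexOfOrder α f ∧
        ∃ z ∈ unitDisk, z ≠ 0 ∧
          x = (Complex.exp ((t : ℂ) * Complex.I) * (f z / z)).re} ∧
    ¬ BddBelow {x : ℝ | ∃ z ∈ unitDisk, z ≠ 0 ∧
          x = (Complex.exp ((t : ℂ) * Complex.I) * (kfun α z / z)).re} :=
  Q_eq_neg_infty_general hα1 ht0 (by nlinarith [Real.pi_pos])
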